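/- There exist x* ∈ X and y* ∈ Nash(x*) such that f(x, y) ≤ f(x*, y*) for every x ∈ X and every y ∈ Nash(x). In other words, the single-leader-multiple-follower game with second-order-cone-reformulated decision-dependent chance constraints has an equilibrium: the leader's strategy x* maximizes the leader's payoff over all leader strategies paired with lower-level Nash-equilibrium responses, and y* is a Nash equilibrium among the followers at x* (the paper's Theorem 2, existence of equilibrium). -/

import Mathlib

open Real

open Module Polynomial MeasureTheory Metric Set Filter Topology Function
open scoped RealInnerProductSpace

/-!
Brouwer's fixed point theorem is obtained by the Milnor-Rogers volume argument. If `r` is a `C¹`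
retraction of a ball onto its boundary sphere, then for small `t > 0` the map `x ↦ x + t (r x - x)`
is a bijection of the open ball with positive Jacobian, so the integral of its Jacobian is the
volume of the ball. That integral is a polynomial in `t`, hence equals the volume at `t = 1` too;
but there the Jacobian is that of `r`, which vanishes because `r` takes values in a sphere.

Nash equilibria are the points `y` with `Φ y y ≤ Φ y z` for all feasible `z`, where `Φ y z` is the
sum of the costs of unilateral deviations from `y` to `z`. Without such a point, a continuous
selection of strictly better replies would have a fixed point, which would be strictly better than
itself.

A Slater point makes the feasible set vary lower hemicontinuously with the leader's strategy: a
feasible point is a limit of points at which the constraint is strict, and these remain feasible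
under small perturbations. Hence every deviation available at a limit is a limit of available
deviations, the graph of the equilibrium correspondence is closed, and the leader maximises a
continuous payoff over a compact set.
-/

theorem exists_polynomial_forall_eval_eq_det_one_add_smul {K V : Type*} [Field K]
    [AddCommGroup V] [Module K V] [FiniteDimensional K V] (f : V →ₗ[K] V) :
    ∃ p : K[X], p.natDegree ≤ finrank K V ∧ ∀ t, p.eval t = LinearMap.det (1 + t • f) := by
  let b := finBasis K V
  let A := LinearMap.toMatrix b b f
  refine ⟨((X : K[X]) • A.map C + (1 : Matrix _ _ K).map C).det, ?_, fun t => ?_⟩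
  · simpa using natDegree_det_X_add_C_le A 1
  · rw [← LinearMap.det_toMatrix b, map_add, map_smul, LinearMap.toMatrix_one, ← coe_evalRingHom,
      RingHom.map_det]
    congr 1
    ext i j
    by_cases hij : i = j <;> simp [A, hij, add_comm, mul_comm t]

theorem integral_eval_eq_of_infinite {α : Type*} [MeasurableSpace α] {μ : Measure α}
    {p : α → ℝ[X]} {n : ℕ} (hp : ∀ x, (p x).natDegree ≤ n) {T : Set ℝ} (hT : T.Infinite) {c : ℝ}
    (hint : ∀ t ∈ T, Integrable (fun x => (p x).eval t) μ)
    (hc : ∀ t ∈ T, ∫ x, (p x).eval t ∂μ = c) (t : ℝ) : ∫ x, (p x).eval t ∂μ = c := by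
  obtain ⟨s, hsT, hs⟩ := hT.exists_subset_card_eq (n + 1)
  have hinj : InjOn id (s : Set ℝ) := injOn_id _
  have heval : ∀ x, (p x).eval t =
      ∑ i ∈ s, (p x).eval i * (Lagrange.basis s id i).eval t := fun x => by
    have hdeg : (p x).degree < s.card :=
      degree_le_natDegree.trans_lt (by rw [hs]; exact_mod_cast Nat.lt_succ_of_le (hp x))
    conv_lhs => rw [Lagrange.eq_interpolate hinj hdeg, Lagrange.interpolate_apply]
    simp [eval_finsetSum]
  calc ∫ x, (p x).eval t ∂μ
      = ∑ i ∈ s, (∫ x, (p x).eval i ∂μ) * (Lagrange.basis s id i).eval t := by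
        simp_rw [heval, ← integral_mul_const]
        exact integral_finsetSum s fun i hi => (hint i (hsT hi)).mul_const _
    _ = c * (∑ i ∈ s, Lagrange.basis s id i).eval t := by
        rw [eval_finsetSum, Finset.mul_sum]
        exact Finset.sum_congr rfl fun i hi => by rw [hc i (hsT hi)]
    _ = c := by
        rw [Lagrange.sum_basis hinj (Finset.card_pos.1 (by omega)), eval_one, mul_one]

theorem injOn_add_smul_of_lipschitzOnWith {E : Type*} [NormedAddCommGroup E] [NormedSpace ℝ E]
    {u : E → E} {s : Set E} {K : NNReal} (hu : LipschitzOnWith K u s) {t : ℝ} (ht : |t| * K < 1) :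
    InjOn (fun x => x + t • u x) s := by
  intro x hx y hy hxy
  have hdist : dist x y ≤ |t| * K * dist x y :=
    calc dist x y = ‖t • (u y - u x)‖ := by
          rw [dist_eq_norm, smul_sub, sub_eq_sub_iff_add_eq_add.2 (by simpa [add_comm] using hxy)]
      _ = |t| * dist (u x) (u y) := by rw [norm_smul, Real.norm_eq_abs, dist_comm, dist_eq_norm]
      _ ≤ |t| * (K * dist x y) := by gcongr; exact hu.dist_le_mul x hx y hy
      _ = |t| * K * dist x y := (mul_assoc ..).symm
  have : dist x y ≤ 0 := by nlinarith [dist_nonneg (x := x) (y := y)]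
  exact dist_le_zero.1 this

theorem image_ball_eq_of_isOpen {E : Type*} [NormedAddCommGroup E] [NormedSpace ℝ E]
    [ProperSpace E] {h : E → E} {c : E} {R : ℝ} (hcont : ContinuousOn h (closedBall c R))
    (hfix : ∀ x ∈ sphere c R, h x = x) (hmaps : MapsTo h (ball c R) (ball c R))
    (hopen : IsOpen (h '' ball c R)) : h '' ball c R = ball c R := by
  refine hmaps.image_subset.antisymm ?_
  rcases (ball c R).eq_empty_or_nonempty with hne | hne
  · simp [hne]
  refine (convex_ball c R).isPreconnected.subset_of_closure_inter_subset hopen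
    ?_ ?_
  · rw [inter_eq_right.2 hmaps.image_subset]
    exact hne.image h
  · rintro y ⟨hy, hyB⟩
    have hclosed : IsClosed (h '' closedBall c R) :=
      ((isCompact_closedBall c R).image_of_continuousOn hcont).isClosed
    obtain ⟨x, hx, rfl⟩ := closure_minimal (image_mono ball_subset_closedBall) hclosed hy
    refine mem_image_of_mem h ((mem_closedBall.1 hx).lt_of_ne fun hxs => ?_)
    rw [hfix x hxs] at hyB
    exact (mem_ball.1 hyB).ne hxs

section Volume

variable {E : Type*} [NormedAddCommGroup E] [NormedSpace ℝ E]

theorem eventually_forall_det_one_add_smul_pos {X : Type*} [TopologicalSpace X] {K : Set X}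
    (hK : IsCompact K) {A : X → E →L[ℝ] E} (hA : ∀ x ∈ K, ContinuousAt A x) :
    ∀ᶠ t : ℝ in 𝓝 0, ∀ x ∈ K, 0 < (1 + t • A x).det := by
  refine hK.eventually_forall_of_forall_eventually fun x hx => ?_
  have hcont : ContinuousAt (fun z : ℝ × X => (1 + z.1 • A z.2).det) (0, x) :=
    ContinuousLinearMap.continuous_det.continuousAt.comp
      (continuousAt_const.add (continuousAt_fst.smul ((hA x hx).comp continuousAt_snd)))
  refine hcont.eventually_const_lt ?_
  simp [ContinuousLinearMap.det]

variable {r : E → E} {c : E} {R : ℝ}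

theorem hasFDerivAt_add_smul_sub {x : E} (hr : DifferentiableAt ℝ r x) (t : ℝ) :
    HasFDerivAt (fun x => x + t • (r x - x)) (1 + t • (fderiv ℝ r x - 1)) x :=
  (hasFDerivAt_id x).add ((hr.hasFDerivAt.sub (hasFDerivAt_id x)).const_smul t)

theorem mapsTo_ball_add_smul_sub (hmaps : MapsTo r (ball c R) (closedBall c R)) {t : ℝ}
    (ht : t ∈ Ico (0 : ℝ) 1) : MapsTo (fun x => x + t • (r x - x)) (ball c R) (ball c R) := by
  intro x hx
  have hrx : dist (r x) c ≤ R := hmaps hx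
  have hx : dist x c < R := hx
  calc dist (x + t • (r x - x)) c = ‖(1 - t) • (x - c) + t • (r x - c)‖ := by
        rw [dist_eq_norm]; congr 1; module
    _ ≤ (1 - t) * dist x c + t * dist (r x) c := by
        rw [dist_eq_norm, dist_eq_norm]
        refine (norm_add_le _ _).trans_eq ?_
        rw [norm_smul_of_nonneg (by linarith [ht.2]), norm_smul_of_nonneg ht.1]
    _ < R := by nlinarith [ht.1, ht.2]

variable [FiniteDimensional ℝ E]

theorem isOpen_image_of_det_fderiv_ne_zero {h : E → E} {s : Set E} (hs : IsOpen s)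
    (hh : ∀ x ∈ s, ContDiffAt ℝ 1 h x) (hdet : ∀ x ∈ s, (fderiv ℝ h x).det ≠ 0) :
    IsOpen (h '' s) := by
  have := FiniteDimensional.complete ℝ E
  rw [isOpen_iff_mem_nhds]
  rintro _ ⟨x, hx, rfl⟩
  let A := (fderiv ℝ h x).toContinuousLinearEquivOfDetNeZero (hdet x hx)
  have hstrict : HasStrictFDerivAt h (A : E →L[ℝ] E) x :=
    (hh x hx).hasStrictFDerivAt one_ne_zero
  rw [← hstrict.map_nhds_eq_of_equiv]
  exact image_mem_map (hs.mem_nhds hx)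

theorem eventually_bijOn_ball_add_smul_sub (hr : ∀ x ∈ closedBall c R, ContDiffAt ℝ 1 r x)
    (hmaps : MapsTo r (closedBall c R) (closedBall c R)) (hfix : ∀ x ∈ sphere c R, r x = x) :
    ∀ᶠ t : ℝ in 𝓝[>] 0, BijOn (fun x => x + t • (r x - x)) (ball c R) (ball c R) ∧
      ∀ x ∈ ball c R, 0 < (1 + t • (fderiv ℝ r x - 1)).det := by
  have hu : ∀ x ∈ closedBall c R, ContDiffAt ℝ 1 (fun x => r x - x) x :=
    fun x hx => (hr x hx).sub contDiffAt_id
  obtain ⟨K, hK⟩ : ∃ K, LipschitzOnWith K (fun x => r x - x) (closedBall c R) :=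
    ContDiffOn.exists_lipschitzOnWith (fun x hx => (hu x hx).contDiffWithinAt) one_ne_zero
      (convex_closedBall c R) (isCompact_closedBall c R)
  have hsmall : ∀ᶠ t : ℝ in 𝓝 0, |t| * K < 1 :=
    (Continuous.tendsto' (by fun_prop) 0 0 (by simp)).eventually_lt_const one_pos
  have hpos := eventually_forall_det_one_add_smul_pos (A := fun x => fderiv ℝ r x - 1)
    (isCompact_closedBall c R)
    fun x hx => ((hr x hx).continuousAt_fderiv one_ne_zero).sub continuousAt_const
  filter_upwards [hsmall.filter_mono nhdsWithin_le_nhds, hpos.filter_mono nhdsWithin_le_nhds,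
    Ioo_mem_nhdsGT one_pos] with t htK htpos ht
  have hh : ∀ x ∈ closedBall c R, ContDiffAt ℝ 1 (fun x => x + t • (r x - x)) x :=
    fun x hx => contDiffAt_id.add ((hu x hx).const_smul t)
  have hball := mapsTo_ball_add_smul_sub (hmaps.mono_left ball_subset_closedBall) ⟨ht.1.le, ht.2⟩
  refine ⟨⟨hball, ?_, ?_⟩, fun x hx => htpos x (ball_subset_closedBall hx)⟩
  · exact injOn_add_smul_of_lipschitzOnWith (hK.mono ball_subset_closedBall) htK
  · refine (image_ball_eq_of_isOpen (fun x hx => (hh x hx).continuousAt.continuousWithinAt)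
      (fun x hx => by simp [hfix x hx]) hball ?_).ge
    refine isOpen_image_of_det_fderiv_ne_zero isOpen_ball
      (fun x hx => hh x (ball_subset_closedBall hx)) fun x hx => ?_
    have hx := ball_subset_closedBall hx
    rw [(hasFDerivAt_add_smul_sub ((hr x hx).differentiableAt one_ne_zero) t).fderiv]
    exact (htpos x hx).ne'

theorem integral_det_fderiv_eq_measureReal_ball [MeasurableSpace E] [BorelSpace E]
    (μ : Measure E) [μ.IsAddHaarMeasure] (hr : ∀ x ∈ closedBall c R, ContDiffAt ℝ 1 r x)
    (hmaps : MapsTo r (closedBall c R) (closedBall c R)) (hfix : ∀ x ∈ sphere c R, r x = x) :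
    ∫ x in ball c R, (fderiv ℝ r x).det ∂μ = μ.real (ball c R) := by
  choose p hpdeg hp using fun x => exists_polynomial_forall_eval_eq_det_one_add_smul
    (fderiv ℝ r x - 1 : E →L[ℝ] E).toLinearMap
  have hpe : ∀ t x, (p x).eval t = (1 + t • (fderiv ℝ r x - 1)).det := fun t x => hp x t
  have hint : ∀ t, IntegrableOn (fun x => (p x).eval t) (ball c R) μ := fun t => by
    simp_rw [hpe]
    refine (ContinuousOn.integrableOn_compact (isCompact_closedBall c R) fun x hx =>
      ContinuousAt.continuousWithinAt ?_).mono_set ball_subset_closedBall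
    exact ContinuousLinearMap.continuous_det.continuousAt.comp (continuousAt_const.add
      ((((hr x hx).continuousAt_fderiv one_ne_zero).sub continuousAt_const).const_smul t))
  have hvol : ∀ᶠ t : ℝ in 𝓝[>] 0, ∫ x in ball c R, (p x).eval t ∂μ = μ.real (ball c R) := by
    filter_upwards [eventually_bijOn_ball_add_smul_sub hr hmaps hfix] with t ⟨hbij, hpos⟩
    have hderiv : ∀ x ∈ ball c R, HasFDerivWithinAt (fun x => x + t • (r x - x))
        (1 + t • (fderiv ℝ r x - 1)) (ball c R) x := fun x hx =>
      (hasFDerivAt_add_smul_sub ((hr x (ball_subset_closedBall hx)).differentiableAt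
        one_ne_zero) t).hasFDerivWithinAt
    have hchange := integral_image_eq_integral_abs_det_fderiv_smul μ measurableSet_ball hderiv
      hbij.injOn fun _ => (1 : ℝ)
    rw [hbij.image_eq, setIntegral_const, smul_eq_mul, mul_one] at hchange
    rw [hchange]
    refine setIntegral_congr_fun measurableSet_ball fun x hx => ?_
    simp only [hpe, smul_eq_mul, mul_one, abs_of_pos (hpos x hx)]
  obtain ⟨ε, hε, hT⟩ := mem_nhdsGT_iff_exists_Ioo_subset.1 hvol
  have h1 := integral_eval_eq_of_infinite hpdeg (Ioo_infinite hε)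
    (fun t _ => hint t) (fun t ht => hT ht) 1
  simpa only [hpe, one_smul, add_sub_cancel] using h1

end Volume

section InnerProductSpace

variable {E : Type*} [NormedAddCommGroup E] [InnerProductSpace ℝ E]

theorem det_fderiv_eq_zero_of_eventually_mem_sphere [FiniteDimensional ℝ E] {r : E → E} {c x : E}
    {R : ℝ} (hR : R ≠ 0) (hr : DifferentiableAt ℝ r x) (hsphere : ∀ᶠ y in 𝓝 x, r y ∈ sphere c R) :
    (fderiv ℝ r x).det = 0 := by
  have hperp : ∀ w, ⟪r x - c, fderiv ℝ r x w⟫ = 0 := fun w => by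
    have hconst : (fun y => ‖r y - c‖ ^ 2) =ᶠ[𝓝 x] fun _ => R ^ 2 :=
      hsphere.mono fun y hy => congrArg (· ^ 2) (mem_sphere_iff_norm.1 hy)
    have hderiv := (hr.hasFDerivAt.sub_const c).norm_sq.unique
      ((hasFDerivAt_const (R ^ 2) x).congr_of_eventuallyEq hconst)
    simpa [inner_sub_left] using DFunLike.congr_fun hderiv w
  by_contra hdet
  obtain ⟨w, hw⟩ := ((fderiv ℝ r x).toContinuousLinearEquivOfDetNeZero hdet).surjective (r x - c)
  rw [ContinuousLinearMap.toContinuousLinearEquivOfDetNeZero_apply] at hw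
  have hzero : ‖r x - c‖ ^ 2 = 0 := by rw [← real_inner_self_eq_norm_sq, ← hperp w, hw]
  rw [mem_sphere_iff_norm.1 hsphere.self_of_nhds] at hzero
  exact hR (pow_eq_zero_iff two_ne_zero |>.1 hzero)

theorem exists_mem_sphere_ne_of_mapsTo_sphere [FiniteDimensional ℝ E] {r : E → E} {c : E} {R : ℝ}
    (hR : 0 < R) (hr : ∀ x ∈ closedBall c R, ContDiffAt ℝ 1 r x)
    (hmaps : MapsTo r (closedBall c R) (sphere c R)) : ∃ x ∈ sphere c R, r x ≠ x := by
  by_contra! hfix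
  borelize E
  let μ : Measure E := Measure.addHaar
  have hzero : ∫ x in ball c R, (fderiv ℝ r x).det ∂μ = 0 := by
    refine setIntegral_eq_zero_of_forall_eq_zero fun x hx => ?_
    refine det_fderiv_eq_zero_of_eventually_mem_sphere hR.ne'
      ((hr x (ball_subset_closedBall hx)).differentiableAt one_ne_zero) (c := c) ?_
    filter_upwards [isOpen_ball.mem_nhds hx] with y hy using hmaps (ball_subset_closedBall hy)
  rw [integral_det_fderiv_eq_measureReal_ball μ hr (hmaps.mono_right sphere_subset_closedBall)
    hfix] at hzero
  exact (ENNReal.toReal_pos (measure_ball_pos μ c hR).ne' measure_ball_lt_top.ne).ne' hzero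

/-- The point where the ray from `x` in direction `v` leaves the unit ball. The coefficient of `v`
is the larger root `s` of `‖x + s • v‖ ^ 2 = 1`. For `v = 0` division by zero gives `x`. -/
noncomputable def rayExit (x v : E) : E :=
  x + ((-⟪x, v⟫ + √(⟪x, v⟫ ^ 2 + ‖v‖ ^ 2 * (1 - ‖x‖ ^ 2))) / ‖v‖ ^ 2) • v

theorem norm_rayExit {x v : E} (hx : ‖x‖ ≤ 1) (hv : v ≠ 0) : ‖rayExit x v‖ = 1 := by
  have hv' : ‖v‖ ≠ 0 := norm_ne_zero_iff.2 hv
  have hdisc : 0 ≤ ⟪x, v⟫ ^ 2 + ‖v‖ ^ 2 * (1 - ‖x‖ ^ 2) := by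
    have : ‖x‖ ^ 2 ≤ 1 := pow_le_one₀ (norm_nonneg x) hx
    have : 0 ≤ 1 - ‖x‖ ^ 2 := by linarith
    positivity
  have hsq := Real.sq_sqrt hdisc
  rw [← sq_eq_sq₀ (norm_nonneg _) one_pos.le, rayExit, norm_add_sq_real, norm_smul,
    real_inner_smul_right, mul_pow, Real.norm_eq_abs, sq_abs]
  field_simp
  linear_combination hsq

theorem rayExit_eq_self {x v : E} (hx : ‖x‖ = 1) (hv : 0 ≤ ⟪x, v⟫) : rayExit x v = x := by
  simp [rayExit, hx, Real.sqrt_sq hv]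

theorem contDiffAt_rayExit {F : Type*} [NormedAddCommGroup F] [NormedSpace ℝ F] {n : WithTop ℕ∞}
    {f g : F → E} {x : F} (hf : ContDiffAt ℝ n f x) (hg : ContDiffAt ℝ n g x) (hgx : g x ≠ 0)
    (hdisc : ⟪f x, g x⟫ ^ 2 + ‖g x‖ ^ 2 * (1 - ‖f x‖ ^ 2) ≠ 0) :
    ContDiffAt ℝ n (fun y => rayExit (f y) (g y)) x := by
  have hinner := hf.inner ℝ hg
  have hroot := ((hinner.pow 2).add ((hg.norm_sq ℝ).mul
    (contDiffAt_const.sub (hf.norm_sq ℝ)))).sqrt hdisc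
  exact hf.add (((hinner.neg.add hroot).div (hg.norm_sq ℝ) (by simpa using hgx)).smul hg)

theorem inner_self_sub_pos {x y : E} (hx : ‖x‖ = 1) (hy : ‖y‖ < 1) : 0 < ⟪x, x - y⟫ := by
  rw [inner_sub_right, real_inner_self_eq_norm_sq, hx]
  have := real_inner_le_norm x y
  rw [hx] at this
  linarith

theorem discriminant_rayExit_sub_pos {x y : E} (hx : ‖x‖ ≤ 1) (hy : ‖y‖ < 1) (hxy : x - y ≠ 0) :
    0 < ⟪x, x - y⟫ ^ 2 + ‖x - y‖ ^ 2 * (1 - ‖x‖ ^ 2) := by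
  rcases hx.lt_or_eq with hlt | heq
  · have : 0 < 1 - ‖x‖ ^ 2 := by nlinarith [norm_nonneg x]
    positivity
  · have := inner_self_sub_pos heq hy
    rw [heq]
    positivity

variable [FiniteDimensional ℝ E] {g : E → E}

theorem exists_isFixedPt_of_contDiff (hg : ContDiff ℝ 1 g) (hlt : ∀ x, ‖g x‖ < 1) :
    ∃ x, IsFixedPt g x := by
  by_contra! hfix
  have hne : ∀ x, x - g x ≠ 0 := fun x => sub_ne_zero.2 (Ne.symm (hfix x))
  obtain ⟨x, hx, hrx⟩ := exists_mem_sphere_ne_of_mapsTo_sphere (r := fun x => rayExit x (x - g x))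
    one_pos (fun x hx => contDiffAt_rayExit contDiffAt_id (contDiffAt_id.sub hg.contDiffAt) (hne x)
      (discriminant_rayExit_sub_pos (mem_closedBall_zero_iff.1 hx) (hlt x) (hne x)).ne')
    fun x hx => mem_sphere_zero_iff_norm.2 (norm_rayExit (mem_closedBall_zero_iff.1 hx) (hne x))
  have hx := mem_sphere_zero_iff_norm.1 hx
  exact hrx (rayExit_eq_self hx (inner_self_sub_pos hx (hlt x)).le)

theorem exists_norm_sub_lt_of_continuous (hg : Continuous g) (hlt : ∀ x, ‖g x‖ < 1) {ε : ℝ}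
    (hε : 0 < ε) : ∃ x, ‖x‖ ≤ 1 ∧ ‖g x - x‖ < ε := by
  obtain ⟨h, hh, hclose, -⟩ := hg.exists_contDiff_approx 1 (ε := fun x => min ε (1 - ‖g x‖))
    (by fun_prop) fun x => lt_min hε (sub_pos.2 (hlt x))
  have hdist : ∀ x, ‖h x - g x‖ < min ε (1 - ‖g x‖) := fun x => dist_eq_norm (h x) _ ▸ hclose x
  have hh1 : ∀ x, ‖h x‖ < 1 := fun x => by
    linarith [norm_le_norm_add_norm_sub' (h x) (g x), (hdist x).trans_le (min_le_right _ _)]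
  obtain ⟨x, hx⟩ := exists_isFixedPt_of_contDiff hh hh1
  refine ⟨x, by simpa only [hx.eq] using (hh1 x).le, ?_⟩
  simpa only [hx.eq, norm_sub_rev] using (hdist x).trans_le (min_le_left _ _)

theorem exists_isFixedPt_of_norm_lt_one (hg : Continuous g) (hlt : ∀ x, ‖g x‖ < 1) :
    ∃ x, IsFixedPt g x := by
  obtain ⟨x, -, hx⟩ := (isCompact_closedBall (0 : E) 1).exists_isMinOn
    ⟨0, by simp⟩ (hg.sub continuous_id).norm.continuousOn
  refine ⟨x, ?_⟩
  by_contra hne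
  obtain ⟨y, hy, hyx⟩ := exists_norm_sub_lt_of_continuous hg hlt
    (norm_pos_iff.2 (sub_ne_zero.2 hne))
  exact hyx.not_ge (hx (mem_closedBall_zero_iff.2 hy))

end InnerProductSpace

theorem exists_isFixedPt_of_isBounded_range {E : Type*} [NormedAddCommGroup E] [NormedSpace ℝ E]
    [FiniteDimensional ℝ E] {g : E → E} (hg : Continuous g)
    (hbdd : Bornology.IsBounded (range g)) : ∃ x, IsFixedPt g x := by
  let e := toEuclidean (E := E)
  obtain ⟨R, hR0, hR⟩ := (e.lipschitz.isBounded_image hbdd).exists_pos_norm_lt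
  have hRg : ∀ x, ‖e (g x)‖ < R := fun x => hR _ (mem_image_of_mem e (mem_range_self x))
  obtain ⟨w, hw⟩ := exists_isFixedPt_of_norm_lt_one (g := fun w => R⁻¹ • e (g (e.symm (R • w))))
    (by fun_prop) fun w => by
      rw [norm_smul, norm_inv, Real.norm_of_nonneg hR0.le, inv_mul_lt_one₀ hR0]
      exact hRg _
  refine ⟨e.symm (R • w), e.injective ?_⟩
  rw [e.apply_symm_apply]
  exact (inv_smul_eq_iff₀ hR0.ne').1 hw

theorem exists_mem_forall_diagonal_le {E : Type*} [NormedAddCommGroup E] [NormedSpace ℝ E]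
    [FiniteDimensional ℝ E] {K : Set E} (hne : K.Nonempty) (hK : IsCompact K) {Φ : E → E → ℝ}
    (hdiag : ContinuousOn (fun y => Φ y y) K) (hcont : ∀ z ∈ K, ContinuousOn (Φ · z) K)
    (hconv : ∀ y ∈ K, QuasiconvexOn ℝ K (Φ y)) : ∃ y ∈ K, ∀ z ∈ K, Φ y y ≤ Φ y z := by
  by_contra! hlt
  obtain ⟨z₀, hz₀⟩ := hne
  let better : E → Set E := fun y => {z ∈ K | y ∈ K → Φ y z < Φ y y}
  obtain ⟨g, hg⟩ : ∃ g : C(E, E), ∀ y, g y ∈ better y := by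
    refine exists_continuous_forall_mem_convex_of_local_const (fun y => ?_) fun y => ?_
    · by_cases hy : y ∈ K
      · simpa only [better, hy, forall_const] using (hconv y hy).convex_lt (Φ y y)
      · simpa only [better, hy, IsEmpty.forall_iff, and_true, ofPred_mem_eq] using
          (hconv z₀ hz₀).convex
    · by_cases hy : y ∈ K
      · obtain ⟨z, hz, hzy⟩ := hlt y hy
        have hnear := (hcont z hz y hy).eventually_lt (hdiag y hy) hzy
        exact ⟨z, (eventually_nhdsWithin_iff.1 hnear).mono fun y' hy' => ⟨hz, hy'⟩⟩
      · have hnear : ∀ᶠ y' in 𝓝 y, y' ∉ K := hK.isClosed.isOpen_compl.mem_nhds hy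
        exact ⟨z₀, hnear.mono fun y' hy' => ⟨hz₀, fun h => absurd h hy'⟩⟩
  obtain ⟨y, hy⟩ := exists_isFixedPt_of_isBounded_range g.continuous
    (hK.isBounded.subset (range_subset_iff.2 fun y => (hg y).1))
  have hyK : y ∈ K := hy.eq ▸ (hg y).1
  have hself := (hg y).2 hyK
  rw [hy.eq] at hself
  exact hself.false

theorem convexOn_pi_sum {ι : Type*} [Fintype ι] {E : ι → Type*} [∀ i, AddCommGroup (E i)]
    [∀ i, Module ℝ (E i)] {S : ∀ i, Set (E i)} {F : ∀ i, E i → ℝ}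
    (hF : ∀ i, ConvexOn ℝ (S i) (F i)) :
    ConvexOn ℝ (univ.pi S) fun z : ∀ i, E i => ∑ i, F i (z i) := by
  refine ⟨convex_pi fun i _ => (hF i).1, fun z hz w hw a b ha hb hab => ?_⟩
  calc ∑ i, F i ((a • z + b • w) i) ≤ ∑ i, (a • F i (z i) + b • F i (w i)) :=
        Finset.sum_le_sum fun i _ => (hF i).2 (hz i trivial) (hw i trivial) ha hb hab
    _ = a • ∑ i, F i (z i) + b • ∑ i, F i (w i) := by
        rw [Finset.sum_add_distrib, Finset.smul_sum, Finset.smul_sum]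

section NashEquilibrium

variable {ι : Type*} [DecidableEq ι] {E : ι → Type*}

/-- `y` is a Nash equilibrium of the game in which player `i` chooses a point of `S i` so as to
minimise the cost `φ i`. -/
def IsNashEquilibrium (S : ∀ i, Set (E i)) (φ : ι → (∀ i, E i) → ℝ) (y : ∀ i, E i) : Prop :=
  ∀ i, y i ∈ S i ∧ ∀ t ∈ S i, φ i y ≤ φ i (update y i t)

theorem exists_isNashEquilibrium [Finite ι] [∀ i, NormedAddCommGroup (E i)]
    [∀ i, NormedSpace ℝ (E i)] [∀ i, FiniteDimensional ℝ (E i)] {S : ∀ i, Set (E i)}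
    (hne : ∀ i, (S i).Nonempty) (hcomp : ∀ i, IsCompact (S i)) {φ : ι → (∀ i, E i) → ℝ}
    (hφ : ∀ i, Continuous (φ i))
    (hconv : ∀ i, ∀ y ∈ univ.pi S, ConvexOn ℝ (S i) fun t => φ i (update y i t)) :
    ∃ y, IsNashEquilibrium S φ y := by
  have := Fintype.ofFinite ι
  let Φ : (∀ i, E i) → (∀ i, E i) → ℝ := fun y z => ∑ i, φ i (update y i (z i))
  have hdiag : Continuous fun y => Φ y y := by
    simpa [Φ] using continuous_finsetSum _ fun i _ => hφ i
  have hleft : ∀ z, Continuous (Φ · z) := fun z =>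
    continuous_finsetSum _ fun i _ => (hφ i).comp (continuous_id.update i continuous_const)
  have hright : ∀ y ∈ univ.pi S, ConvexOn ℝ (univ.pi S) (Φ y) := fun y hy =>
    convexOn_pi_sum fun i => hconv i y hy
  obtain ⟨y, hy, hmin⟩ := exists_mem_forall_diagonal_le (univ_pi_nonempty_iff.2 hne)
    (isCompact_univ_pi hcomp) hdiag.continuousOn (fun z _ => (hleft z).continuousOn)
    fun y hy => (hright y hy).quasiconvexOn
  refine ⟨y, fun i => ⟨hy i trivial, fun t ht => ?_⟩⟩
  by_contra! hlt
  refine (hmin (update y i t) ((update_mem_pi_iff_of_mem hy).2 fun _ => ht)).not_gt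
    (Finset.sum_lt_sum (fun j _ => ?_) ⟨i, Finset.mem_univ i, by simpa using hlt⟩)
  rcases eq_or_ne j i with rfl | hji
  · simpa using hlt.le
  · simp [hji]

variable {A : Type*} [TopologicalSpace A]

theorem isClosed_setOf_forall_mem_of_lowerHemicontinuous {B : Type*} [TopologicalSpace B]
    {T : A → Set B} (hT : LowerHemicontinuous T) {C : Set (A × B)} (hC : IsClosed C) :
    IsClosed {x | ∀ t ∈ T x, (x, t) ∈ C} := by
  refine isClosed_iff_frequently.2 fun x hx t ht => ?_
  by_contra hxt
  obtain ⟨u, v, hu, hv, hxu, htv, huv⟩ := isOpen_prod_iff.1 hC.isOpen_compl x t hxt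
  have hmeet := lowerHemicontinuousAt_iff.1 (hT x) v hv ⟨t, ht, htv⟩
  obtain ⟨x', hx', hx'u, t', ht', ht'v⟩ :=
    (hx.and_eventually ((hu.eventually_mem hxu).and hmeet)).exists
  exact huv ⟨hx'u, ht'v⟩ (hx' t' ht')

theorem isClosed_setOf_isNashEquilibrium [∀ i, TopologicalSpace (E i)] {S : A → ∀ i, Set (E i)}
    (hclosed : ∀ i, IsClosed {p : A × E i | p.2 ∈ S p.1 i})
    (hlower : ∀ i, LowerHemicontinuous (S · i)) {φ : ι → A → (∀ i, E i) → ℝ}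
    (hφ : ∀ i, Continuous fun p : A × (∀ i, E i) => φ i p.1 p.2) :
    IsClosed {p : A × ∀ i, E i | IsNashEquilibrium (S p.1) (φ · p.1) p.2} := by
  simp only [IsNashEquilibrium, ofPred_forall, ofPred_and]
  refine isClosed_iInter fun i => IsClosed.inter ?_ ?_
  · exact (hclosed i).preimage (continuous_fst.prodMk ((continuous_apply i).comp continuous_snd))
  · have hlower' : LowerHemicontinuous fun p : A × ∀ i, E i => S p.1 i :=
      lowerHemicontinuous_iff_isOpen_inter_nonempty.2 fun u hu =>
        (lowerHemicontinuous_iff_isOpen_inter_nonempty.1 (hlower i) u hu).preimage continuous_fst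
    have hle : IsClosed {q : (A × ∀ i, E i) × E i |
        φ i q.1.1 q.1.2 ≤ φ i q.1.1 (update q.1.2 i q.2)} :=
      isClosed_le ((hφ i).comp continuous_fst) ((hφ i).comp
        (continuous_fst.fst.prodMk (continuous_fst.snd.update i continuous_snd)))
    simpa only [ofPred_forall, mem_ofPred] using
      isClosed_setOf_forall_mem_of_lowerHemicontinuous hlower' hle

theorem exists_leaderOptimal_isNashEquilibrium [Finite ι] [∀ i, NormedAddCommGroup (E i)]
    [∀ i, NormedSpace ℝ (E i)] [∀ i, FiniteDimensional ℝ (E i)] {X : Set A} (hXne : X.Nonempty)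
    (hX : IsCompact X) {Y : ∀ i, Set (E i)} (hY : ∀ i, IsCompact (Y i)) {S : A → ∀ i, Set (E i)}
    (hne : ∀ x i, (S x i).Nonempty) (hSY : ∀ x i, S x i ⊆ Y i)
    (hclosed : ∀ i, IsClosed {p : A × E i | p.2 ∈ S p.1 i})
    (hlower : ∀ i, LowerHemicontinuous (S · i)) {φ : ι → A → (∀ i, E i) → ℝ}
    (hφ : ∀ i, Continuous fun p : A × (∀ i, E i) => φ i p.1 p.2)
    (hconv : ∀ i x, ∀ y ∈ univ.pi (S x), ConvexOn ℝ (S x i) fun t => φ i x (update y i t))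
    {f : A → (∀ i, E i) → ℝ} (hf : Continuous fun p : A × (∀ i, E i) => f p.1 p.2) :
    ∃ x ∈ X, ∃ y, IsNashEquilibrium (S x) (φ · x) y ∧
      ∀ x' ∈ X, ∀ y', IsNashEquilibrium (S x') (φ · x') y' → f x' y' ≤ f x y := by
  let G : Set (A × ∀ i, E i) :=
    X ×ˢ univ.pi Y ∩ {p | IsNashEquilibrium (S p.1) (φ · p.1) p.2}
  have hG : IsCompact G :=
    (hX.prod (isCompact_univ_pi hY)).inter_right
      (isClosed_setOf_isNashEquilibrium hclosed hlower hφ)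
  have hmem : ∀ x ∈ X, ∀ y, IsNashEquilibrium (S x) (φ · x) y → (x, y) ∈ G := fun x hx y hy =>
    ⟨⟨hx, fun i _ => hSY x i (hy i).1⟩, hy⟩
  have hS : ∀ x i, IsCompact (S x i) := fun x i =>
    (hY i).of_isClosed_subset ((hclosed i).preimage (Continuous.prodMk_right x))
      (hSY x i)
  obtain ⟨x₀, hx₀⟩ := hXne
  obtain ⟨y₀, hy₀⟩ := exists_isNashEquilibrium (hne x₀) (hS x₀)
    (fun i => (hφ i).comp (Continuous.prodMk_right x₀)) (fun i => hconv i x₀)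
  obtain ⟨⟨x, y⟩, ⟨⟨hx, -⟩, hy⟩, hmax⟩ :=
    hG.exists_isMaxOn ⟨(x₀, y₀), hmem x₀ hx₀ y₀ hy₀⟩ hf.continuousOn
  exact ⟨x, hx, y, hy, fun x' hx' y' hy' => hmax (hmem x' hx' y' hy')⟩

end NashEquilibrium

theorem lowerHemicontinuous_sublevel_of_slater {A F : Type*} [TopologicalSpace A] [AddCommGroup F]
    [Module ℝ F] [TopologicalSpace F] [ContinuousAdd F] [ContinuousSMul ℝ F] {Y : Set F}
    {c : A → F → ℝ} {b : ℝ} (hcont : ∀ t ∈ Y, Continuous (c · t))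
    (hconv : ∀ x, ConvexOn ℝ Y (c x)) (hslater : ∀ x, ∃ t ∈ Y, c x t < b) :
    LowerHemicontinuous fun x => {t ∈ Y | c x t ≤ b} := by
  refine lowerHemicontinuous_iff.2 fun x => lowerHemicontinuousAt_iff.2 fun u hu => ?_
  rintro ⟨t, ⟨htY, htb⟩, htu⟩
  obtain ⟨s, hsY, hsb⟩ := hslater x
  have htend : Tendsto (fun a : ℝ => (1 - a) • t + a • s) (𝓝[>] 0) (𝓝 t) :=
    (Continuous.tendsto' (by fun_prop) 0 t (by simp)).mono_left nhdsWithin_le_nhds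
  obtain ⟨a, hau, ha0, ha1⟩ :=
    ((htend.eventually (hu.mem_nhds htu)).and (Ioo_mem_nhdsGT one_pos)).exists
  have haY : (1 - a) • t + a • s ∈ Y := (hconv x).1 htY hsY (by linarith) ha0.le (by ring)
  have hab : c x ((1 - a) • t + a • s) < b :=
    calc c x ((1 - a) • t + a • s) ≤ (1 - a) * c x t + a * c x s :=
          (hconv x).2 htY hsY (by linarith) ha0.le (by ring)
      _ < b := by nlinarith
  filter_upwards [(hcont _ haY).continuousAt.eventually_lt_const hab] with x' hx'
  exact ⟨_, ⟨haY, hx'.le⟩, hau⟩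

theorem convexOn_mul_add_mul_abs {s : Set ℝ} (hs : Convex ℝ s) (a : ℝ) {k : ℝ} (hk : 0 ≤ k) :
    ConvexOn ℝ s fun t => a * t + k * |t| :=
  ((LinearMap.mul ℝ ℝ a).convexOn hs).add ((convexOn_norm hs).smul hk)

theorem stmt_14_general {A ι : Type*} [TopologicalSpace A] [Finite ι] [DecidableEq ι]
    {E : ι → Type*} [∀ i, NormedAddCommGroup (E i)] [∀ i, NormedSpace ℝ (E i)]
    [∀ i, FiniteDimensional ℝ (E i)] {X : Set A} (hXne : X.Nonempty) (hX : IsCompact X)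
    {f : A → (∀ i, E i) → ℝ} (hf : Continuous fun p : A × (∀ i, E i) => f p.1 p.2)
    {Y : ∀ i, Set (E i)} (hY : ∀ i, IsCompact (Y i)) {c : ∀ i, A → E i → ℝ} {b : ι → ℝ}
    (hc : ∀ i, Continuous fun p : A × E i => c i p.1 p.2)
    (hcconv : ∀ i x, ConvexOn ℝ (Y i) (c i x)) (hslater : ∀ i x, ∃ t ∈ Y i, c i x t < b i)
    {φ : ι → A → (∀ i, E i) → ℝ} (hφ : ∀ i, Continuous fun p : A × (∀ i, E i) => φ i p.1 p.2)
    (hφconv : ∀ i x, ∀ y ∈ univ.pi Y, ConvexOn ℝ (Y i) fun t => φ i x (update y i t)) :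
    ∃ x ∈ X, ∃ y, IsNashEquilibrium (fun i => {t ∈ Y i | c i x t ≤ b i}) (φ · x) y ∧
      ∀ x' ∈ X, ∀ y', IsNashEquilibrium (fun i => {t ∈ Y i | c i x' t ≤ b i}) (φ · x') y' →
        f x' y' ≤ f x y := by
  have hclosed : ∀ i, IsClosed {p : A × E i | p.2 ∈ Y i ∧ c i p.1 p.2 ≤ b i} := fun i =>
    ((hY i).isClosed.preimage continuous_snd).inter (isClosed_le (hc i) continuous_const)
  have hlower : ∀ i, LowerHemicontinuous fun x => {t ∈ Y i | c i x t ≤ b i} := fun i =>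
    lowerHemicontinuous_sublevel_of_slater
      (fun t _ => (hc i).comp (Continuous.prodMk_left t)) (hcconv i) (hslater i)
  have hne : ∀ x i, {t ∈ Y i | c i x t ≤ b i}.Nonempty := fun x i =>
    (hslater i x).imp fun t ht => ⟨ht.1, ht.2.le⟩
  refine exists_leaderOptimal_isNashEquilibrium hXne hX hY hne (fun x i => sep_subset _ _) hclosed
    hlower hφ (fun i x y hy => ?_) hf
  exact (hφconv i x y (pi_mono (fun i _ => sep_subset _ _) hy)).subset (sep_subset _ _)
    ((hcconv i x).convex_le (b i))

/-- The paper's Theorem 2: existence of an equilibrium of the single-leader-multiple-follower game with reformulated DDCCs. -/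
theorem stmt_14
    (m I : ℕ) (hm : 1 ≤ m) (hI : 1 ≤ I)
    (X : Set (Fin m → ℝ)) (hXne : X.Nonempty) (hXc : IsCompact X)
    (f : (Fin m → ℝ) → (Fin I → ℝ) → ℝ)
    (hf : Continuous fun p : (Fin m → ℝ) × (Fin I → ℝ) => f p.1 p.2)
    (Y : Fin I → Set ℝ)
    (hYne : ∀ i, (Y i).Nonempty) (hYc : ∀ i, IsCompact (Y i))
    (hYconv : ∀ i, Convex ℝ (Y i)) (hY0 : ∀ i, (0 : ℝ) ∈ Y i)
    (b l Sig : Fin I → ℝ)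
    (hb : ∀ i, 0 < b i) (hl : ∀ i, 0 ≤ l i) (hSig : ∀ i, 0 ≤ Sig i)
    (μ : Fin I → (Fin m → ℝ) → ℝ) (hμ : ∀ i, Continuous (μ i))
    (S : Fin I → (Fin m → ℝ) → Set ℝ)
    (hS : ∀ i x, S i x = {y ∈ Y i | μ i x * y + l i * Real.sqrt (Sig i) * |y| ≤ b i})
    (φ : Fin I → (Fin m → ℝ) → (Fin I → ℝ) → ℝ)
    (hφc : ∀ i, Continuous fun p : (Fin m → ℝ) × (Fin I → ℝ) => φ i p.1 p.2)
    (hφconv : ∀ i x y, ConvexOn ℝ Set.univ fun t : ℝ => φ i x (Function.update y i t))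
    (Nash : (Fin m → ℝ) → Set (Fin I → ℝ))
    (hNash : ∀ x, Nash x = {y : Fin I → ℝ | ∀ i, y i ∈ S i x ∧
      ∀ t ∈ S i x, φ i x y ≤ φ i x (Function.update y i t)})
    : ∃ xstar ∈ X, ∃ ystar ∈ Nash xstar,
      ∀ x ∈ X, ∀ y ∈ Nash x, f x y ≤ f xstar ystar := by
  have hnash : ∀ x y, y ∈ Nash x ↔ IsNashEquilibrium
      (fun i => {t ∈ Y i | μ i x * t + l i * √(Sig i) * |t| ≤ b i}) (φ · x) y := fun x y => by
    rw [hNash, ← funext (hS · x)]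
    rfl
  simp only [hnash]
  exact stmt_14_general hXne hXc hf hYc (fun i => by fun_prop)
    (fun i x => convexOn_mul_add_mul_abs (hYconv i) _ (mul_nonneg (hl i) (Real.sqrt_nonneg _)))
    (fun i x => ⟨0, hY0 i, by simpa using hb i⟩) hφc
    fun i x y _ => (hφconv i x y).subset (subset_univ _) (hYconv i)
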